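/- arXiv:1402.5739 — 2 statements merged into one kernel-verified Lean document; each statement's English description precedes it below -/
import Mathlib

section
/- For every integer n ≥ 2 and every cyclic permutation [φ] of {1,…,n}, the associated 3-hypergraph satisfies χ(H_[φ]) ≤ ω(H_[φ]) − 1. Consequently, every cyclic permutation 3-hypergraph H on at least two vertices satisfies χ(H) ≤ ω(H) − 1. -/
open scoped Classical

/-- A `3`-hypergraph: a finite vertex set together with a finite set of edges,
each edge intended to be a 3-element subset of the vertex set. -/
structure ThreeHypergraph (α : Type*) where
  verts : Finset α
  edges : Finset (Finset α)

namespace ThreeHypergraph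

variable {α : Type*}

/-- The structural requirements on a `3`-hypergraph: every edge is a
3-element subset of the vertex set. -/
def IsValid (H : ThreeHypergraph α) : Prop :=
  ∀ e ∈ H.edges, e.card = 3 ∧ e ⊆ H.verts

/-- A proper colouring with `k` colours: a partition of the vertices into (at most)
`k` colour classes such that no edge is contained in a single class. -/
def ProperColoring (H : ThreeHypergraph α) (k : ℕ) : Prop :=
  ∃ c : α → ℕ, (∀ v ∈ H.verts, c v < k) ∧
    ∀ e ∈ H.edges, ¬ ∃ i : ℕ, ∀ v ∈ e, c v = i

/-- The chromatic number: the least `k` admitting a proper colouring. -/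
noncomputable def chromaticNumber (H : ThreeHypergraph α) : ℕ :=
  sInf {k | H.ProperColoring k}

/-- A clique: a set of vertices all of whose 3-element subsets are edges. -/
def IsClique (H : ThreeHypergraph α) (S : Finset α) : Prop :=
  S ⊆ H.verts ∧ ∀ t ⊆ S, t.card = 3 → t ∈ H.edges

/-- The clique number: the largest cardinality of a clique. -/
noncomputable def cliqueNumber (H : ThreeHypergraph α) : ℕ :=
  sSup {m | ∃ S : Finset α, H.IsClique S ∧ S.card = m}

end ThreeHypergraph

/-- `i < j < k` are in clockwise order with respect to the cyclic permutation `[φ]` of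
`Fin n` if some representative `ψ` of the cyclic equivalence class of `φ` (i.e. some
cyclic shift of `φ`) satisfies `ψ⁻¹ i < ψ⁻¹ j < ψ⁻¹ k`. -/
def Clockwise {n : ℕ} (φ : Equiv.Perm (Fin n)) (i j k : Fin n) : Prop :=
  ∃ m : Fin n, φ.symm i + m < φ.symm j + m ∧ φ.symm j + m < φ.symm k + m

/-- The `3`-hypergraph associated to a cyclic permutation `[φ]` of `{1, …, n}`
(encoded as `Fin n`): its edges are the triples `{i, j, k}` with `i < j < k` in
clockwise order with respect to `[φ]`. -/
noncomputable def cyclicPermHG (n : ℕ) (φ : Equiv.Perm (Fin n)) : ThreeHypergraph (Fin n) where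
  verts := Finset.univ
  edges := (Finset.powersetCard 3 (Finset.univ : Finset (Fin n))).filter
    (fun e => ∃ i j k : Fin n, i < j ∧ j < k ∧ Clockwise φ i j k ∧ e = {i, j, k})

/-- An isomorphism of 3-hypergraphs: a bijection of vertex sets carrying edges to
edges in both directions. -/
def HGIso {α β : Type*} [DecidableEq α] [DecidableEq β]
    (H : ThreeHypergraph α) (H' : ThreeHypergraph β) : Prop :=
  ∃ f : α → β, Set.InjOn f ↑H.verts ∧ H.verts.image f = H'.verts ∧
    ∀ e : Finset α, e ⊆ H.verts → (e ∈ H.edges ↔ e.image f ∈ H'.edges)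

/-- A cyclic permutation 3-hypergraph: one isomorphic to `H_[φ]` for some cyclic
permutation `[φ]`. -/
def IsCyclicPermHG {α : Type*} [DecidableEq α] (H : ThreeHypergraph α) : Prop :=
  H.IsValid ∧ ∃ (n : ℕ) (φ : Equiv.Perm (Fin n)), HGIso H (cyclicPermHG n φ)

/-!
Cut the cyclic permutation just before `0` and order the vertices by `u ≺ v` when `u < v` and `u`
comes before `v` after the cut. Every chain of `≺` is a clique, so the height of a vertex, the
largest size of a chain ending there minus one, is less than `ω`. Wherever the cut falls in a
clockwise triple `i < j < k`, two of the three vertices other than `0` remain comparable, hence have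
different heights. As `0` is the only vertex of height `0`, the height classes `0` and `1` may be
merged, which leaves `ω - 1` colours.
-/

namespace ThreeHypergraph

variable {α : Type*} {H : ThreeHypergraph α}

lemma ProperColoring.chromaticNumber_le {k : ℕ} (h : H.ProperColoring k) :
    H.chromaticNumber ≤ k :=
  Nat.sInf_le h

lemma bddAbove_card_isClique (H : ThreeHypergraph α) :
    BddAbove {m | ∃ S : Finset α, H.IsClique S ∧ S.card = m} := by
  refine ⟨H.verts.card, ?_⟩
  rintro _ ⟨S, hS, rfl⟩
  exact Finset.card_le_card hS.1

lemma isClique_empty (H : ThreeHypergraph α) : H.IsClique ∅ := by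
  refine ⟨Finset.empty_subset _, fun t ht htcard => ?_⟩
  simp [Finset.subset_empty.mp ht] at htcard

lemma IsClique.card_le_cliqueNumber {S : Finset α} (hS : H.IsClique S) :
    S.card ≤ H.cliqueNumber :=
  le_csSup H.bddAbove_card_isClique ⟨S, hS, rfl⟩

lemma exists_isClique_card_eq_cliqueNumber (H : ThreeHypergraph α) :
    ∃ S : Finset α, H.IsClique S ∧ S.card = H.cliqueNumber := by
  refine Nat.sSup_mem ?_ H.bddAbove_card_isClique
  exact ⟨0, ∅, H.isClique_empty, rfl⟩

lemma height_lt_cliqueNumber [Preorder α]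
    (hchain : ∀ S : Finset α, IsChain (· < ·) (S : Set α) → H.IsClique S) (v : α) :
    Order.height v < H.cliqueNumber := by
  have hlength (p : LTSeries α) : p.length + 1 ≤ H.cliqueNumber := by
    let S : Finset α := Finset.univ.map ⟨p, p.strictMono.injective⟩
    have hS : IsChain (· < ·) (S : Set α) := by
      simp only [S, Finset.coe_map, Finset.coe_univ, Set.image_univ]
      rintro _ ⟨a, rfl⟩ _ ⟨b, rfl⟩ hab
      exact (ne_of_apply_ne p hab).lt_or_gt.imp (p.strictMono ·) (p.strictMono ·)
    simpa [S] using (hchain S hS).card_le_cliqueNumber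
  have hpos : 0 < H.cliqueNumber := (Nat.succ_pos _).trans_le (hlength (RelSeries.singleton _ v))
  have hle : Order.height v ≤ (H.cliqueNumber - 1 : ℕ) :=
    Order.height_le fun p _ => by exact_mod_cast Nat.le_sub_one_of_lt (hlength p)
  exact hle.trans_lt (by exact_mod_cast Nat.sub_one_lt_of_lt hpos)

lemma properColoring_of_isStrictOrder (r : α → α → Prop) [IsStrictOrder α r]
    (hchain : ∀ S : Finset α, IsChain r (S : Set α) → H.IsClique S)
    (hedge : ∀ e ∈ H.edges, ∃ u ∈ e, ∃ v ∈ e, (∃ b, r b u) ∧ r u v)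
    (hr : ∃ u v, r u v) : H.ProperColoring (H.cliqueNumber - 1) := by
  let := partialOrderOfSO r
  let ht (v : α) : ℕ := (Order.height v).toNat
  have hcoe (v : α) : (ht v : ℕ∞) = Order.height v :=
    ENat.natCast_toNat (height_lt_cliqueNumber hchain v).ne_top
  have ht_lt_cliqueNumber (v : α) : ht v < H.cliqueNumber := by
    exact_mod_cast (hcoe v).trans_lt (height_lt_cliqueNumber hchain v)
  have ht_lt_ht {u v : α} (huv : r u v) : ht u < ht v := by
    have := Order.height_strictMono huv (height_lt_cliqueNumber hchain u).lt_top
    rw [← hcoe, ← hcoe] at this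
    exact_mod_cast this
  -- Truncated subtraction merges the classes of heights `0` and `1`.
  refine ⟨fun v => ht v - 1, fun v _ => ?_, ?_⟩
  · obtain ⟨a, b, hab⟩ := hr
    have := ht_lt_ht hab
    have := ht_lt_cliqueNumber b
    have := ht_lt_cliqueNumber v
    dsimp only
    lia
  · rintro e he ⟨i, hi⟩
    obtain ⟨u, hu, v, hv, ⟨b, hbu⟩, huv⟩ := hedge e he
    have := ht_lt_ht hbu
    have := ht_lt_ht huv
    have : ht u - 1 = ht v - 1 := (hi u hu).trans (hi v hv).symm
    lia

end ThreeHypergraph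

namespace HGIso

variable {α β : Type*} [DecidableEq α] [DecidableEq β]
  {H : ThreeHypergraph α} {H' : ThreeHypergraph β}

lemma card_verts_eq (h : HGIso H H') : H.verts.card = H'.verts.card := by
  obtain ⟨f, hinj, hverts, -⟩ := h
  rw [← hverts, Finset.card_image_of_injOn hinj]

lemma properColoring (h : HGIso H H') (hH : H.IsValid) {k : ℕ} (hk : H'.ProperColoring k) :
    H.ProperColoring k := by
  obtain ⟨f, -, hverts, hedges⟩ := h
  obtain ⟨c, hc, hproper⟩ := hk
  refine ⟨c ∘ f, fun v hv => hc _ (hverts ▸ Finset.mem_image_of_mem f hv), ?_⟩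
  rintro e he ⟨i, hi⟩
  exact hproper _ ((hedges e (hH e he).2).mp he) ⟨i, Finset.forall_mem_image.mpr hi⟩

lemma cliqueNumber_le (h : HGIso H H') : H'.cliqueNumber ≤ H.cliqueNumber := by
  obtain ⟨f, hinj, hverts, hedges⟩ := h
  obtain ⟨S', hS', hcard⟩ := H'.exists_isClique_card_eq_cliqueNumber
  obtain ⟨S, hS, rfl⟩ := Finset.subset_image_iff.mp (hverts ▸ hS'.1)
  have card_image {t : Finset α} (ht : (t : Set α) ⊆ H.verts) : (t.image f).card = t.card :=
    Finset.card_image_of_injOn (hinj.mono ht)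
  have hclique : H.IsClique S := by
    refine ⟨hS, fun t htS htcard => ?_⟩
    have ht : t ⊆ H.verts := htS.trans hS
    exact (hedges t ht).mpr
      (hS'.2 _ (Finset.image_subset_image htS) ((card_image ht).trans htcard))
  rw [← hcard, card_image hS]
  exact hclique.card_le_cliqueNumber

end HGIso

section CyclicPerm

variable {n : ℕ}

lemma exists_lt_lt_eq_of_card_eq_three {α : Type*} [LinearOrder α] {t : Finset α}
    (ht : t.card = 3) : ∃ i j k, i < j ∧ j < k ∧ t = {i, j, k} := by
  let e := t.orderEmbOfFin ht
  refine ⟨e 0, e 1, e 2, by simp, by simp, ?_⟩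
  rw [← Finset.image_orderEmbOfFin_univ t ht,
    show (Finset.univ : Finset (Fin 3)) = {0, 1, 2} by decide]
  simp only [Finset.image_insert, Finset.image_singleton, e]

lemma fin_add_right_lt_cyclic {x y z : Fin n} (hxy : x < y) (hyz : y < z) (t : Fin n) :
    (x + t < y + t ∧ y + t < z + t) ∨ (y + t < z + t ∧ z + t < x + t) ∨
      (z + t < x + t ∧ x + t < y + t) := by
  simp only [Fin.lt_def, Fin.val_add_eq_ite] at *
  split_ifs <;> lia

lemma mem_edges_cyclicPermHG {φ : Equiv.Perm (Fin n)} {e : Finset (Fin n)} :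
    e ∈ (cyclicPermHG n φ).edges ↔
      ∃ i j k, i < j ∧ j < k ∧ Clockwise φ i j k ∧ e = {i, j, k} := by
  simp only [cyclicPermHG, Finset.mem_filter, Finset.mem_powersetCard_univ]
  refine and_iff_right_of_imp ?_
  rintro ⟨i, j, k, hij, hjk, -, rfl⟩
  exact Finset.card_eq_three.mpr ⟨i, j, k, hij.ne, (hij.trans hjk).ne, hjk.ne, rfl⟩

variable [NeZero n] {φ : Equiv.Perm (Fin n)}

/-- The position of `v` in the representative of `[φ]` that starts with `0`. -/
def posFromZero (φ : Equiv.Perm (Fin n)) (v : Fin n) : Fin n :=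
  φ.symm v - φ.symm 0

lemma posFromZero_zero (φ : Equiv.Perm (Fin n)) : posFromZero φ 0 = 0 :=
  sub_self _

lemma posFromZero_pos {v : Fin n} (hv : v ≠ 0) : 0 < posFromZero φ v :=
  Fin.pos_iff_ne_zero.mpr (sub_ne_zero.mpr (φ.symm.injective.ne hv))

lemma Clockwise.of_posFromZero_lt {i j k : Fin n} (hij : posFromZero φ i < posFromZero φ j)
    (hjk : posFromZero φ j < posFromZero φ k) : Clockwise φ i j k := by
  simp only [posFromZero, sub_eq_add_neg] at hij hjk
  exact ⟨-φ.symm 0, hij, hjk⟩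

lemma Clockwise.posFromZero_lt {i j k : Fin n} (h : Clockwise φ i j k) :
    (posFromZero φ i < posFromZero φ j ∧ posFromZero φ j < posFromZero φ k) ∨
      (posFromZero φ j < posFromZero φ k ∧ posFromZero φ k < posFromZero φ i) ∨
      (posFromZero φ k < posFromZero φ i ∧ posFromZero φ i < posFromZero φ j) := by
  obtain ⟨m, hij, hjk⟩ := h
  have hshift (v : Fin n) : φ.symm v + m + (-m - φ.symm 0) = posFromZero φ v := by
    rw [posFromZero]; abel
  simpa only [hshift] using fin_add_right_lt_cyclic hij hjk (-m - φ.symm 0)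

/-- The order `≺` on the vertices whose chains are the sets listed increasingly by the
representative of `[φ]` that starts with `0`. -/
def Precedes (φ : Equiv.Perm (Fin n)) (u v : Fin n) : Prop :=
  u < v ∧ posFromZero φ u < posFromZero φ v

instance : IsStrictOrder (Fin n) (Precedes φ) where
  irrefl u h := lt_irrefl u h.1
  trans _ _ _ huv hvw := ⟨huv.1.trans hvw.1, huv.2.trans hvw.2⟩

lemma precedes_zero_left {v : Fin n} (hv : v ≠ 0) : Precedes φ 0 v :=
  ⟨Fin.pos_iff_ne_zero.mpr hv, (posFromZero_zero φ).trans_lt (posFromZero_pos hv)⟩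

lemma isClique_of_isChain_precedes {S : Finset (Fin n)}
    (hS : IsChain (Precedes φ) (S : Set (Fin n))) : (cyclicPermHG n φ).IsClique S := by
  refine ⟨Finset.subset_univ _, fun t htS htcard => ?_⟩
  obtain ⟨i, j, k, hij, hjk, rfl⟩ := exists_lt_lt_eq_of_card_eq_three htcard
  have hmono {u v : Fin n} (hu : u ∈ S) (hv : v ∈ S) (huv : u < v) :
      posFromZero φ u < posFromZero φ v :=
    ((hS hu hv huv.ne).resolve_right fun h => h.1.not_gt huv).2
  have hi : i ∈ S := htS (by simp)
  have hj : j ∈ S := htS (by simp)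
  have hk : k ∈ S := htS (by simp)
  exact mem_edges_cyclicPermHG.mpr ⟨i, j, k, hij, hjk,
    .of_posFromZero_lt (hmono hi hj hij) (hmono hj hk hjk), by ext; simp⟩

lemma exists_precedes_of_mem_edges {e : Finset (Fin n)} (he : e ∈ (cyclicPermHG n φ).edges) :
    ∃ u ∈ e, ∃ v ∈ e, u ≠ 0 ∧ Precedes φ u v := by
  obtain ⟨i, j, k, hij, hjk, hφ, rfl⟩ := mem_edges_cyclicPermHG.mp he
  have hlt : posFromZero φ j < posFromZero φ k ∨
      (posFromZero φ k < posFromZero φ i ∧ posFromZero φ i < posFromZero φ j) := by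
    have := hφ.posFromZero_lt
    tauto
  rcases hlt with hlt | ⟨hki, hlt⟩
  · exact ⟨j, by simp, k, by simp, ((Fin.zero_le i).trans_lt hij).ne', hjk, hlt⟩
  · refine ⟨i, by simp, j, by simp, ?_, hij, hlt⟩
    rintro rfl
    exact (Fin.zero_le _).not_gt (posFromZero_zero φ ▸ hki)

end CyclicPerm

lemma properColoring_cyclicPermHG {n : ℕ} (hn : 2 ≤ n) (φ : Equiv.Perm (Fin n)) :
    (cyclicPermHG n φ).ProperColoring ((cyclicPermHG n φ).cliqueNumber - 1) := by
  have : NeZero n := ⟨by lia⟩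
  have : Nontrivial (Fin n) := Fin.nontrivial_iff_two_le.mpr hn
  refine ThreeHypergraph.properColoring_of_isStrictOrder (Precedes φ)
    (fun _ => isClique_of_isChain_precedes) (fun e he => ?_) ?_
  · obtain ⟨u, hu, v, hv, hu0, huv⟩ := exists_precedes_of_mem_edges he
    exact ⟨u, hu, v, hv, ⟨0, precedes_zero_left hu0⟩, huv⟩
  · obtain ⟨v, hv⟩ := exists_ne (0 : Fin n)
    exact ⟨0, v, precedes_zero_left hv⟩

/-- For every `n ≥ 2` and cyclic permutation `[φ]` of `{1, …, n}`,
`χ(H_[φ]) ≤ ω(H_[φ]) − 1`; consequently every cyclic permutation 3-hypergraph on at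
least two vertices satisfies `χ(H) ≤ ω(H) − 1`. -/
theorem cyclicPermHG_chromatic_le {α : Type*} [DecidableEq α] :
    (∀ (n : ℕ), 2 ≤ n → ∀ φ : Equiv.Perm (Fin n),
      (cyclicPermHG n φ).chromaticNumber ≤ (cyclicPermHG n φ).cliqueNumber - 1) ∧
    (∀ H : ThreeHypergraph α, IsCyclicPermHG H → 2 ≤ H.verts.card →
      H.chromaticNumber ≤ H.cliqueNumber - 1) := by
  refine ⟨fun n hn φ => (properColoring_cyclicPermHG hn φ).chromaticNumber_le, ?_⟩
  rintro H ⟨hH, n, φ, hiso⟩ hcard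
  have hn : 2 ≤ n := by simpa [hiso.card_verts_eq, cyclicPermHG] using hcard
  calc H.chromaticNumber
      ≤ (cyclicPermHG n φ).cliqueNumber - 1 :=
        (hiso.properColoring hH (properColoring_cyclicPermHG hn φ)).chromaticNumber_le
    _ ≤ H.cliqueNumber - 1 := Nat.sub_le_sub_right hiso.cliqueNumber_le 1
end

section
/- For all integers q ≥ 2 and r ≥ 1, the winding permutation 3-hypergraph W_{q,r} has chromatic number χ(W_{q,r}) = ⌈n/(r+1)⌉, where n = r(q−1)+1. -/
open scoped Classical

/-- The winding permutation `φ_{q,r}` of `{1, …, n}`, `n = r(q−1)+1`, as a function on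
values in `{1, …, n}`: `φ_{q,r}(n) = 1` and, for `1 ≤ i < n` with `i ≡ j (mod r)` and
`1 ≤ j ≤ r`, `φ_{q,r}(i) = 2 + (q−1)(r−j) + (i−j)/r`. -/
def windingFun (q r i : ℕ) : ℕ :=
  if i = r * (q - 1) + 1 then 1
  else
    let j := if i % r = 0 then r else i % r
    2 + (q - 1) * (r - j) + (i - j) / r

/-!
Put `n = r * (q - 1) + 1`. Up to a rotation, `φ⁻¹` is multiplication by `r` modulo `n`, so the edges
of `W_{q,r}` are the triples `i < j < k` for which `r i, r j, r k` are in cyclic order modulo `n`.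

*Upper bound.* Colour `v` by the block of `r + 1` consecutive residues containing `r v`.
Multiplication by `-(q - 1)` inverts multiplication by `r`. As `(q - 1) * r < n`, multiplication by
`q - 1` preserves the cyclic order of each block, so negation reverses it: within a block, `i, j, k`
and `r i, r j, r k` have opposite cyclic orders.

*Lower bound.* Let `u` be the least element of an independent set. If `u < v < w` and `r (v - u)`,
`r (w - u)` had the same quotient by `n`, then `0`, `r (v - u)`, `r (w - u)` would be in cyclic
order modulo `n`, so `{u, v, w}` would be an edge. Hence the elements other than `u` have distinct
quotients in `{0, …, r - 1}`, and an independent set has at most `r + 1` elements.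
-/

namespace ThreeHypergraph

variable {α : Type*} {H : ThreeHypergraph α}

/-- An independent set of a hypergraph, i.e. a possible colour class: a set containing no edge. It
is not required to consist of vertices, so that every fibre of a colouring `α → ℕ` qualifies. -/
def IsIndependent (H : ThreeHypergraph α) (S : Set α) : Prop :=
  ∀ e ∈ H.edges, ¬ (e : Set α) ⊆ S

theorem properColoring_iff_exists_isIndependent {k : ℕ} :
    H.ProperColoring k ↔
      ∃ c : α → ℕ, (∀ v ∈ H.verts, c v < k) ∧ ∀ b, H.IsIndependent (c ⁻¹' {b}) := by
  simp only [ProperColoring, IsIndependent, not_exists, Set.subset_def, Finset.mem_coe,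
    Set.mem_preimage, Set.mem_singleton_iff]
  exact exists_congr fun c ↦ and_congr_right fun _ ↦
    ⟨fun h b e he ↦ h e he b, fun h e he b ↦ h b e he⟩

theorem IsIndependent.mono {S T : Set α} (hT : H.IsIndependent T) (hST : S ⊆ T) :
    H.IsIndependent S :=
  fun e he heS ↦ hT e he (heS.trans hST)

theorem ProperColoring.card_verts_le {k a : ℕ} (hk : H.ProperColoring k)
    (ha : ∀ S ⊆ H.verts, H.IsIndependent (S : Set α) → S.card ≤ a) :
    H.verts.card ≤ a * k := by
  obtain ⟨c, hck, hc⟩ := properColoring_iff_exists_isIndependent.1 hk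
  have maps_to_range : ∀ v ∈ H.verts, c v ∈ Finset.range k :=
    fun v hv ↦ Finset.mem_range.2 (hck v hv)
  simpa only [Finset.card_range] using Finset.card_le_mul_card_image_of_maps_to maps_to_range a
    fun b _ ↦ ha _ (Finset.filter_subset _ _) <|
      (hc b).mono fun v hv ↦ (Finset.mem_filter.1 hv).2

end ThreeHypergraph

open ThreeHypergraph

section CyclicOrder

variable {n : ℕ} [NeZero n] {a b c : Fin n}

theorem sbtw_iff_sub_lt_sub : sbtw a b c ↔ 0 < b - a ∧ b - a < c - a := by
  simp only [Fin.sbtw_iff, Fin.lt_def, Fin.val_zero, ← Nat.cast_lt (α := ℤ),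
    Fin.coe_int_sub_eq_ite, Fin.le_def]
  split_ifs <;> omega

theorem sbtw_add_right_iff (d : Fin n) : sbtw (a + d) (b + d) (c + d) ↔ sbtw a b c := by
  simp only [sbtw_iff_sub_lt_sub, add_sub_add_right_eq_sub]

theorem exists_add_lt_add_iff_sbtw : (∃ m, a + m < b + m ∧ b + m < c + m) ↔ sbtw a b c := by
  constructor
  · rintro ⟨m, h⟩
    exact (sbtw_add_right_iff m).1 (Or.inl h)
  · intro h
    obtain ⟨hb, hbc⟩ := sbtw_iff_sub_lt_sub.1 h
    exact ⟨-a, by simpa only [← sub_eq_add_neg, sub_self] using ⟨hb, hbc⟩⟩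

theorem sbtw_neg_neg_neg_iff : sbtw (-a) (-b) (-c) ↔ sbtw c b a := by
  rw [sbtw_cyclic (a := c), sbtw_iff_sub_lt_sub, sbtw_iff_sub_lt_sub]
  simp only [neg_sub_neg, Fin.lt_def, Fin.val_zero, ← Nat.cast_lt (α := ℤ),
    Fin.coe_int_sub_eq_ite, Fin.le_def]
  split_ifs <;> omega

theorem val_nsmul_eq_mul_mod (m : ℕ) (a : Fin n) : (m • a).val = m * a % n := by
  induction m with
  | zero => simp
  | succ m ih => rw [succ_nsmul, Fin.val_add, ih, Nat.mod_add_mod, Nat.succ_mul]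

theorem sbtw_nsmul_of_lt_of_mul_sub_lt {m : ℕ} (hm : 0 < m) (hab : a < b) (hbc : b < c)
    (hac : m * (c - a : ℕ) < n) : sbtw (m • a) (m • b) (m • c) := by
  have val_nsmul_sub {d : Fin n} (had : a ≤ d) (hdc : d ≤ c) :
      (m • (d - a)).val = m * (d - a : ℕ) := by
    rw [val_nsmul_eq_mul_mod, Fin.sub_val_of_le had, Nat.mod_eq_of_lt]
    exact (Nat.mul_le_mul_left m (Nat.sub_le_sub_right hdc a)).trans_lt hac
  rw [sbtw_iff_sub_lt_sub, ← nsmul_sub, ← nsmul_sub, Fin.lt_def, Fin.lt_def, Fin.val_zero,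
    val_nsmul_sub hab.le hbc.le, val_nsmul_sub (hab.trans hbc).le le_rfl]
  exact ⟨Nat.mul_pos hm (Nat.sub_pos_of_lt hab),
    Nat.mul_lt_mul_of_pos_left (Nat.sub_lt_sub_right hab.le hbc) hm⟩

theorem sbtw_nsmul_of_lt_of_div_eq {m : ℕ} (hm : m.Coprime n) (hab : a < b) (hbc : b < c)
    (hdiv : m * (b - a : ℕ) / n = m * (c - a : ℕ) / n) : sbtw (m • a) (m • b) (m • c) := by
  have hba : 0 < (b - a : ℕ) := Nat.sub_pos_of_lt hab
  have mod_pos : 0 < m * (b - a : ℕ) % n := Nat.emod_pos_of_not_dvd fun h ↦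
    (Nat.le_of_dvd hba (hm.symm.dvd_of_dvd_mul_left h)).not_gt <|
      (Nat.sub_le _ _).trans_lt b.isLt
  have hm0 : 0 < m := Nat.pos_of_ne_zero fun h ↦ by simp [h] at mod_pos
  have mod_lt_mod : m * (b - a : ℕ) % n < m * (c - a : ℕ) % n := by
    have hlt : m * (b - a : ℕ) < m * (c - a : ℕ) :=
      Nat.mul_lt_mul_of_pos_left (Nat.sub_lt_sub_right hab.le hbc) hm0
    rw [← Nat.div_add_mod (m * (b - a : ℕ)) n, ← Nat.div_add_mod (m * (c - a : ℕ)) n, hdiv] at hlt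
    exact Nat.lt_of_add_lt_add_left hlt
  rw [sbtw_iff_sub_lt_sub, ← nsmul_sub, ← nsmul_sub, Fin.lt_def, Fin.lt_def,
    val_nsmul_eq_mul_mod, val_nsmul_eq_mul_mod, Fin.sub_val_of_le hab.le,
    Fin.sub_val_of_le (hab.trans hbc).le]
  exact ⟨mod_pos, mod_lt_mod⟩

theorem card_le_of_not_sbtw_nsmul {r : ℕ} (hr : r.Coprime n) (S : Finset (Fin n))
    (hS : ∀ u ∈ S, ∀ v ∈ S, ∀ w ∈ S, u < v → v < w → ¬ sbtw (r • u) (r • v) (r • w)) :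
    S.card ≤ r + 1 := by
  rcases S.eq_empty_or_nonempty with rfl | hne
  · exact Nat.zero_le _
  set u := S.min' hne
  have huS : u ∈ S := S.min'_mem hne
  have lt_of_mem_erase {v : Fin n} (hv : v ∈ S.erase u) : u < v :=
    S.min'_lt_of_mem_erase_min' hne hv
  have quotient_ne {v w : Fin n} (hv : v ∈ S.erase u) (hw : w ∈ S.erase u) (hvw : v < w) :
      r * (v - u : ℕ) / n ≠ r * (w - u : ℕ) / n := fun h ↦
    hS u huS v (Finset.mem_of_mem_erase hv) w (Finset.mem_of_mem_erase hw) (lt_of_mem_erase hv)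
      hvw (sbtw_nsmul_of_lt_of_div_eq hr (lt_of_mem_erase hv) hvw h)
  have quotient_injOn : Set.InjOn (fun v : Fin n ↦ r * (v - u : ℕ) / n) (S.erase u) := by
    intro v hv w hw h
    by_contra hne
    rcases lt_or_gt_of_ne hne with hvw | hwv
    · exact quotient_ne hv hw hvw h
    · exact quotient_ne hw hv hwv h.symm
  have quotient_mem_range : ∀ v ∈ S.erase u, r * (v - u : ℕ) / n ∈ Finset.range r := by
    intro v hv
    have huv := lt_of_mem_erase hv
    have hr0 : 0 < r := Nat.pos_of_ne_zero fun h ↦ by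
      have hn : n = 1 := by simpa [h] using hr
      omega
    rw [Finset.mem_range, Nat.div_lt_iff_lt_mul (NeZero.pos n)]
    exact Nat.mul_lt_mul_of_pos_left ((Nat.sub_le _ _).trans_lt v.isLt) hr0
  have card_erase_le := Finset.card_le_card_of_injOn _ quotient_mem_range quotient_injOn
  rw [Finset.card_erase_of_mem huS, Finset.card_range] at card_erase_le
  omega

end CyclicOrder

section CyclicPermutation

variable {n : ℕ} {φ : Equiv.Perm (Fin n)}

theorem clockwise_iff_sbtw [NeZero n] {i j k : Fin n} :
    Clockwise φ i j k ↔ sbtw (φ.symm i) (φ.symm j) (φ.symm k) :=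
  exists_add_lt_add_iff_sbtw

theorem isIndependent_cyclicPermHG_iff {S : Set (Fin n)} :
    (cyclicPermHG n φ).IsIndependent S ↔
      ∀ i ∈ S, ∀ j ∈ S, ∀ k ∈ S, i < j → j < k → ¬ Clockwise φ i j k := by
  constructor
  · intro h i hi j hj k hk hij hjk hc
    refine h {i, j, k} ?_ (by simp [Set.insert_subset_iff, hi, hj, hk])
    refine Finset.mem_filter.2 ⟨Finset.mem_powersetCard.2 ⟨Finset.subset_univ _, ?_⟩,
      i, j, k, hij, hjk, hc, rfl⟩
    exact Finset.card_eq_three.2 ⟨i, j, k, hij.ne, (hij.trans hjk).ne, hjk.ne, rfl⟩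
  · intro h e he heS
    obtain ⟨-, i, j, k, hij, hjk, hc, rfl⟩ := Finset.mem_filter.1 he
    exact h i (heS (by simp)) j (heS (by simp)) k (heS (by simp)) hij hjk hc

end CyclicPermutation

section MultiplicationModulo

theorem nsmul_nsmul_eq_neg {m r : ℕ} (v : Fin (r * m + 1)) : m • r • v = -v := by
  have card_nsmul : (r * m + 1) • v = 0 := by simpa using card_nsmul_eq_zero (x := v)
  rw [← mul_nsmul]
  exact eq_neg_of_add_eq_zero_left (by rwa [← succ_nsmul])

theorem not_sbtw_nsmul_of_div_eq {m r c : ℕ} (hm : 0 < m) {i j k : Fin (r * m + 1)} (hij : i < j)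
    (hjk : j < k) (hi : (r • i).val / (r + 1) = c) (hj : (r • j).val / (r + 1) = c)
    (hk : (r • k).val / (r + 1) = c) : ¬ sbtw (r • i) (r • j) (r • k) := by
  have nsmul_of_lt {x y z : Fin (r * m + 1)} (hx : x.val / (r + 1) = c)
      (hz : z.val / (r + 1) = c) (hxy : x < y) (hyz : y < z) : sbtw (m • x) (m • y) (m • z) := by
    apply sbtw_nsmul_of_lt_of_mul_sub_lt hm hxy hyz
    have hzx : (z - x : ℕ) ≤ r := by
      rw [Nat.div_eq_iff (Nat.succ_pos r)] at hx hz
      omega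
    exact Nat.lt_succ_of_le ((Nat.mul_le_mul_left m hzx).trans_eq (mul_comm m r))
  intro h
  have hmr : sbtw (m • r • i) (m • r • j) (m • r • k) := by
    rcases h with ⟨hxy, hyz⟩ | ⟨hyz, hzx⟩ | ⟨hzx, hxy⟩
    · exact nsmul_of_lt hi hk hxy hyz
    · exact (nsmul_of_lt hj hi hyz hzx).cyclic_right
    · exact (nsmul_of_lt hk hj hzx hxy).cyclic_left
  simp only [nsmul_nsmul_eq_neg, sbtw_neg_neg_neg_iff] at hmr
  exact hmr.not_sbtw (Or.inl ⟨hij, hjk⟩)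

end MultiplicationModulo

section Winding

variable {q r : ℕ}

theorem windingFun_add_mul {j t : ℕ} (hj : 0 < j) (hjr : j ≤ r)
    (hn : j + r * t ≠ r * (q - 1) + 1) :
    windingFun q r (j + r * t) = 2 + (q - 1) * (r - j) + t := by
  have hr : 0 < r := hj.trans_le hjr
  have residue_eq : (if (j + r * t) % r = 0 then r else (j + r * t) % r) = j := by
    rw [Nat.add_mul_mod_self_left]
    rcases hjr.eq_or_lt with rfl | hlt
    · rw [Nat.mod_self, if_pos rfl]
    · rw [Nat.mod_eq_of_lt hlt, if_neg hj.ne']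
  rw [windingFun, if_neg hn]
  simp only [residue_eq, Nat.add_sub_cancel_left, Nat.mul_div_cancel_left t hr]

theorem mul_windingFun_modEq {i : ℕ} (hr : 0 < r) (hi : 0 < i) :
    r * windingFun q r i ≡ i + r [MOD r * (q - 1) + 1] := by
  by_cases hn : i = r * (q - 1) + 1
  · rw [windingFun, if_pos hn, mul_one, hn]
    exact Nat.add_modEq_left.symm
  obtain ⟨j, t, hj, hjr, rfl⟩ : ∃ j t, 0 < j ∧ j ≤ r ∧ j + r * t = i :=
    ⟨(i - 1) % r + 1, (i - 1) / r, Nat.succ_pos _, Nat.mod_lt _ hr, by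
      have := Nat.mod_add_div (i - 1) r
      omega⟩
  obtain ⟨s, rfl⟩ := Nat.exists_eq_add_of_le hjr
  rw [windingFun_add_mul hj hjr hn, Nat.add_sub_cancel_left]
  calc (j + s) * (2 + (q - 1) * s + t)
      = j + (j + s) * t + (j + s) + ((j + s) * (q - 1) + 1) * s := by ring
    _ ≡ j + (j + s) * t + (j + s) [MOD (j + s) * (q - 1) + 1] := Nat.add_mul_mod_self_left _ _ _

variable {φ : Equiv.Perm (Fin (r * (q - 1) + 1))}

theorem symm_add_one_eq_nsmul (hr : 0 < r)
    (hφ : ∀ i : Fin (r * (q - 1) + 1), (φ i : ℕ) + 1 = windingFun q r ((i : ℕ) + 1))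
    (v : Fin (r * (q - 1) + 1)) : φ.symm v + 1 = r • v := by
  have h := mul_windingFun_modEq (q := q) hr (φ.symm v : ℕ).succ_pos
  rw [Nat.succ_eq_add_one, ← hφ, φ.apply_symm_apply, mul_add, mul_one] at h
  ext
  rw [val_nsmul_eq_mul_mod, h.add_right_cancel', Fin.val_add, Fin.val_one', Nat.add_mod_mod]

theorem isIndependent_winding_iff (hr : 0 < r)
    (hφ : ∀ i : Fin (r * (q - 1) + 1), (φ i : ℕ) + 1 = windingFun q r ((i : ℕ) + 1))
    {S : Set (Fin (r * (q - 1) + 1))} :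
    (cyclicPermHG (r * (q - 1) + 1) φ).IsIndependent S ↔
      ∀ i ∈ S, ∀ j ∈ S, ∀ k ∈ S, i < j → j < k → ¬ sbtw (r • i) (r • j) (r • k) := by
  simp only [isIndependent_cyclicPermHG_iff, clockwise_iff_sbtw, ← symm_add_one_eq_nsmul hr hφ,
    sbtw_add_right_iff]

end Winding

/-- For all `q ≥ 2` and `r ≥ 1`, the winding permutation 3-hypergraph `W_{q,r}`
(the 3-hypergraph associated to the cyclic permutation `[φ_{q,r}]` of `{1, …, n}`,
`n = r(q−1)+1`, here encoded on `Fin n` with `i ↦ i+1`) has chromatic number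
`⌈n/(r+1)⌉`. -/
theorem chromaticNumber_winding (q r : ℕ) (hq : 2 ≤ q) (hr : 1 ≤ r)
    (φ : Equiv.Perm (Fin (r * (q - 1) + 1)))
    (hφ : ∀ i : Fin (r * (q - 1) + 1), ((φ i : ℕ) + 1) = windingFun q r ((i : ℕ) + 1)) :
    (cyclicPermHG (r * (q - 1) + 1) φ).chromaticNumber =
      ((r * (q - 1) + 1) + r) / (r + 1) := by
  refine IsLeast.csInf_eq ⟨?_, fun k hk ↦ ?_⟩
  · refine properColoring_iff_exists_isIndependent.2
      ⟨fun v ↦ (r • v).val / (r + 1), fun v _ ↦ ?_, fun c ↦ ?_⟩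
    · exact Nat.div_lt_of_lt_mul <| (r • v).isLt.trans_le <| le_smul_ceilDiv (Nat.succ_pos r)
    · exact (isIndependent_winding_iff hr hφ).2 fun i hi j hj k hk hij hjk ↦
        not_sbtw_nsmul_of_div_eq (Nat.sub_pos_of_lt hq) hij hjk hi hj hk
  · have coprime : r.Coprime (r * (q - 1) + 1) := by simp
    have card_le : r * (q - 1) + 1 ≤ (r + 1) * k := by
      simpa [cyclicPermHG] using hk.card_verts_le fun S _ hS ↦
        card_le_of_not_sbtw_nsmul coprime S ((isIndependent_winding_iff hr hφ).1 hS)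
    exact (ceilDiv_le_iff_le_mul (Nat.succ_pos r)).2 card_le
end
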